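/- If θ is an angle function for α, then for all (s, v): det(φ_s, φ_v, φ_sv) = f(s)·sin θ(s) = τ(s), and det(φ_s, φ_v, φ_ss) = v²·(f′(s)g(s) − f(s)g′(s)) + v·f′(s)·sin θ(s) − f(s)·sin θ(s)·cos θ(s) − v·f(s)·g(s)·cos θ(s), where det is the determinant of the 3×3 matrix whose rows are the given vectors. (These are the numerators of the second fundamental form coefficients M and L; the coefficient N = det(φ_s, φ_v, φ_vv)/√(EG−F²) vanishes since φ_vv = 0.) -/

import Mathlib

open RealInnerProductSpace

/-- Cross product on `EuclideanSpace ℝ (Fin 3)`. -/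
noncomputable def cross3 (u v : EuclideanSpace ℝ (Fin 3)) : EuclideanSpace ℝ (Fin 3) :=
  (EuclideanSpace.equiv (Fin 3) ℝ).symm
    (crossProduct ((EuclideanSpace.equiv (Fin 3) ℝ) u) ((EuclideanSpace.equiv (Fin 3) ℝ) v))

/-- Determinant of the 3×3 matrix whose rows are the given vectors. -/
noncomputable def det3 (u v w : EuclideanSpace ℝ (Fin 3)) : ℝ :=
  Matrix.det (Matrix.of ![(EuclideanSpace.equiv (Fin 3) ℝ) u,
    (EuclideanSpace.equiv (Fin 3) ℝ) v, (EuclideanSpace.equiv (Fin 3) ℝ) w])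

/-!
An orthonormal frame `(e₁, e₂, e₃)` with `e₁′ = a e₂` automatically satisfies
`e₂′ = -a e₁ + b e₃` and `e₃′ = -b e₂`. Besides the Frenet frame `(T, N, B)`, with
`(a, b) = (κ, τ)`, this applies to the alternative frame `(N, C, W)`, with `(a, b) = (f, g)`,
because `N′ = f C`. In the alternative frame `T = -(κ/f) C + (τ/f) W`, so that `φ_s`, `φ_v = C`,
`φ_sv = C′` and `φ_ss` have explicit components and both determinants reduce to `2 × 2` minors.
-/

section CrossProduct

theorem inner_eq_dotProduct_ofLp {ι : Type*} [Fintype ι] (u v : EuclideanSpace ℝ ι) :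
    ⟪u, v⟫ = dotProduct u.ofLp v.ofLp := by
  rw [EuclideanSpace.inner_eq_star_dotProduct, star_trivial, dotProduct_comm]

theorem inner_cross3 (u v w : EuclideanSpace ℝ (Fin 3)) : ⟪u, cross3 v w⟫ = det3 u v w :=
  (inner_eq_dotProduct_ofLp _ _).trans (triple_product_eq_det u.ofLp v.ofLp w.ofLp)

theorem inner_cross3_cross3 (u v w x : EuclideanSpace ℝ (Fin 3)) :
    ⟪cross3 u v, cross3 w x⟫ = ⟪u, w⟫ * ⟪v, x⟫ - ⟪u, x⟫ * ⟪v, w⟫ := by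
  simp only [inner_eq_dotProduct_ofLp]
  exact cross_dot_cross u.ofLp v.ofLp w.ofLp x.ofLp

theorem inner_self_cross3 (u v : EuclideanSpace ℝ (Fin 3)) : ⟪u, cross3 u v⟫ = 0 :=
  (inner_eq_dotProduct_ofLp _ _).trans (dot_self_cross u.ofLp v.ofLp)

theorem inner_cross3_self (u v : EuclideanSpace ℝ (Fin 3)) : ⟪v, cross3 u v⟫ = 0 :=
  (inner_eq_dotProduct_ofLp _ _).trans (dot_cross_self u.ofLp v.ofLp)

theorem det3_apply (u v w : EuclideanSpace ℝ (Fin 3)) :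
    det3 u v w = u 0 * v 1 * w 2 - u 0 * v 2 * w 1 - u 1 * v 0 * w 2 + u 1 * v 2 * w 0
      + u 2 * v 0 * w 1 - u 2 * v 1 * w 0 :=
  Matrix.det_fin_three _

theorem det3_rotate (u v w : EuclideanSpace ℝ (Fin 3)) : det3 u v w = det3 w u v := by
  simp only [det3_apply]; ring

theorem det3_combination_middle (u v w : EuclideanSpace ℝ (Fin 3)) (a₁ a₂ a₃ b₁ b₂ b₃ : ℝ) :
    det3 (a₁ • u + a₂ • v + a₃ • w) v (b₁ • u + b₂ • v + b₃ • w) =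
      (a₁ * b₃ - a₃ * b₁) * det3 u v w := by
  simp only [det3_apply, PiLp.add_apply, PiLp.smul_apply, smul_eq_mul]; ring

theorem det3_rotated (u v w : EuclideanSpace ℝ (Fin 3)) (x y : ℝ) :
    det3 v (-x • u + y • w) (y • u + x • w) = (x ^ 2 + y ^ 2) * det3 u v w := by
  simp only [det3_apply, PiLp.add_apply, PiLp.smul_apply, smul_eq_mul]; ring

theorem contDiff_cross3 {E : Type*} [NormedAddCommGroup E] [NormedSpace ℝ E] {n : WithTop ℕ∞}
    {u v : E → EuclideanSpace ℝ (Fin 3)} (hu : ContDiff ℝ n u) (hv : ContDiff ℝ n v) :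
    ContDiff ℝ n fun s => cross3 (u s) (v s) := by
  have hu' := contDiff_euclidean.1 hu
  have hv' := contDiff_euclidean.1 hv
  refine contDiff_euclidean.2 fun i => ?_
  fin_cases i <;> exact ((hu' _).mul (hv' _)).sub ((hu' _).mul (hv' _))

end CrossProduct

section OrthonormalFrame

variable {E : Type*} [NormedAddCommGroup E] [InnerProductSpace ℝ E]

theorem orthonormal_three_iff {u v w : E} :
    Orthonormal ℝ ![u, v, w] ↔
      (⟪u, u⟫ = 1 ∧ ⟪v, v⟫ = 1 ∧ ⟪w, w⟫ = 1) ∧ ⟪u, v⟫ = 0 ∧ ⟪u, w⟫ = 0 ∧ ⟪v, w⟫ = 0 := by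
  rw [orthonormal_iff_ite]
  constructor
  · exact fun h => ⟨⟨h 0 0, h 1 1, h 2 2⟩, h 0 1, h 0 2, h 1 2⟩
  · rintro ⟨⟨huu, hvv, hww⟩, huv, huw, hvw⟩ i j
    fin_cases i <;> fin_cases j <;>
      simp [-inner_self_eq_norm_sq_to_K, real_inner_comm u v, real_inner_comm u w,
        real_inner_comm v w, huu, hvv, hww, huv, huw, hvw]

theorem orthonormal_cross3 {u v : EuclideanSpace ℝ (Fin 3)} (hu : ⟪u, u⟫ = 1) (hv : ⟪v, v⟫ = 1)
    (huv : ⟪u, v⟫ = 0) : Orthonormal ℝ ![u, v, cross3 u v] := by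
  refine orthonormal_three_iff.2
    ⟨⟨hu, hv, ?_⟩, huv, inner_self_cross3 u v, inner_cross3_self u v⟩
  rw [inner_cross3_cross3, hu, hv, huv, mul_one, zero_mul, sub_zero]

theorem orthonormal_rotated {u v w : E} (h : Orthonormal ℝ ![u, v, w]) {x y : ℝ}
    (hxy : x ^ 2 + y ^ 2 = 1) : Orthonormal ℝ ![v, -x • u + y • w, y • u + x • w] := by
  obtain ⟨⟨huu, hvv, hww⟩, huv, huw, hvw⟩ := orthonormal_three_iff.1 h
  rw [orthonormal_three_iff]
  simp only [inner_add_left, inner_add_right, real_inner_smul_left, real_inner_smul_right,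
    real_inner_comm u v, real_inner_comm u w, huu, hvv, hww, huv, huw, hvw]
  refine ⟨⟨trivial, ?_, ?_⟩, ?_, ?_, ?_⟩ <;> linarith

theorem eq_inner_smul_add_of_orthonormal {u v w : E} (h : Orthonormal ℝ ![u, v, w])
    (hE : Module.finrank ℝ E = 3) (x : E) :
    x = ⟪u, x⟫ • u + ⟪v, x⟫ • v + ⟪w, x⟫ • w := by
  have : FiniteDimensional ℝ E := Module.finite_of_finrank_eq_succ hE
  have hspan := h.linearIndependent.span_eq_top_of_card_eq_finrank' (by simp [hE])
  simpa [Fin.sum_univ_three] using ((OrthonormalBasis.mk h hspan.ge).sum_repr' x).symm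

theorem inner_deriv_right_of_inner_const {u v : ℝ → E} {c s : ℝ} (hu : DifferentiableAt ℝ u s)
    (hv : DifferentiableAt ℝ v s) (h : ∀ t, ⟪u t, v t⟫ = c) :
    ⟪u s, deriv v s⟫ = -⟪deriv u s, v s⟫ := by
  rw [eq_neg_iff_add_eq_zero, ← deriv_inner_apply ℝ hu hv]
  simp only [h, deriv_const]

theorem inner_self_deriv_of_inner_self_const {u : ℝ → E} {c s : ℝ} (hu : DifferentiableAt ℝ u s)
    (h : ∀ t, ⟪u t, u t⟫ = c) : ⟪u s, deriv u s⟫ = 0 := by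
  have := inner_deriv_right_of_inner_const hu hu h
  rw [real_inner_comm] at this ⊢
  linarith

variable {e₁ e₂ e₃ : ℝ → E} {s a b : ℝ}

theorem deriv_second_of_orthonormal_frame (hE : Module.finrank ℝ E = 3)
    (he : ∀ t, Orthonormal ℝ ![e₁ t, e₂ t, e₃ t]) (h₁ : HasDerivAt e₁ (a • e₂ s) s)
    (h₂ : DifferentiableAt ℝ e₂ s) (hb : ⟪deriv e₂ s, e₃ s⟫ = b) :
    deriv e₂ s = -a • e₁ s + b • e₃ s := by
  have hframe := fun t => orthonormal_three_iff.1 (he t)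
  have h₁₂ : ⟪e₁ s, deriv e₂ s⟫ = -a := by
    rw [inner_deriv_right_of_inner_const h₁.differentiableAt h₂ fun t => (hframe t).2.1, h₁.deriv,
      real_inner_smul_left, (hframe s).1.2.1, mul_one]
  have h₂₂ : ⟪e₂ s, deriv e₂ s⟫ = 0 :=
    inner_self_deriv_of_inner_self_const h₂ fun t => (hframe t).1.2.1
  rw [eq_inner_smul_add_of_orthonormal (he s) hE (deriv e₂ s), h₁₂, h₂₂, real_inner_comm, hb,
    zero_smul, add_zero]

theorem deriv_third_of_orthonormal_frame (hE : Module.finrank ℝ E = 3)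
    (he : ∀ t, Orthonormal ℝ ![e₁ t, e₂ t, e₃ t]) (h₁ : HasDerivAt e₁ (a • e₂ s) s)
    (h₂ : DifferentiableAt ℝ e₂ s) (h₃ : DifferentiableAt ℝ e₃ s) (hb : ⟪deriv e₂ s, e₃ s⟫ = b) :
    deriv e₃ s = -b • e₂ s := by
  have hframe := fun t => orthonormal_three_iff.1 (he t)
  have h₁₃ : ⟪e₁ s, deriv e₃ s⟫ = 0 := by
    rw [inner_deriv_right_of_inner_const h₁.differentiableAt h₃ fun t => (hframe t).2.2.1, h₁.deriv,
      real_inner_smul_left, (hframe s).2.2.2, mul_zero, neg_zero]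
  have h₂₃ : ⟪e₂ s, deriv e₃ s⟫ = -b := by
    rw [inner_deriv_right_of_inner_const h₂ h₃ fun t => (hframe t).2.2.2, hb]
  have h₃₃ : ⟪e₃ s, deriv e₃ s⟫ = 0 :=
    inner_self_deriv_of_inner_self_const h₃ fun t => (hframe t).1.2.2
  rw [eq_inner_smul_add_of_orthonormal (he s) hE (deriv e₃ s), h₁₃, h₂₃, h₃₃, zero_smul, zero_smul,
    zero_add, add_zero]

end OrthonormalFrame

section PrincipalNormal

variable {E : Type*} [NormedAddCommGroup E]

section NormedSpace

variable [NormedSpace ℝ E]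

/-- The curvature `κ = ‖α″‖` of a unit-speed curve. -/
noncomputable def curvature (α : ℝ → E) (s : ℝ) : ℝ :=
  ‖deriv (deriv α) s‖

/-- The principal normal `N = α″ / κ` of a unit-speed curve; it is `0` where `κ` vanishes. -/
noncomputable def principalNormal (α : ℝ → E) (s : ℝ) : E :=
  (curvature α s)⁻¹ • deriv (deriv α) s

variable {α : ℝ → E}

theorem contDiff_deriv_deriv {n : WithTop ℕ∞} (hα : ContDiff ℝ (n + 2) α) :
    ContDiff ℝ n (deriv (deriv α)) := by
  rw [← one_add_one_eq_two, ← add_assoc] at hα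
  exact hα.deriv'.deriv'

theorem deriv_deriv_eq_curvature_smul {s : ℝ} (hκ : 0 < curvature α s) :
    deriv (deriv α) s = curvature α s • principalNormal α s :=
  (smul_inv_smul₀ hκ.ne' _).symm

end NormedSpace

variable [InnerProductSpace ℝ E] {α : ℝ → E} {n : WithTop ℕ∞}

theorem contDiff_curvature (hα : ContDiff ℝ (n + 2) α) (hκ : ∀ s, 0 < curvature α s) :
    ContDiff ℝ n (curvature α) :=
  (contDiff_deriv_deriv hα).norm ℝ fun s => norm_pos_iff.1 (hκ s)

theorem contDiff_principalNormal (hα : ContDiff ℝ (n + 2) α) (hκ : ∀ s, 0 < curvature α s) :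
    ContDiff ℝ n (principalNormal α) :=
  ((contDiff_curvature hα hκ).inv fun s => (hκ s).ne').smul (contDiff_deriv_deriv hα)

theorem inner_principalNormal_self {s : ℝ} (hκ : 0 < curvature α s) :
    ⟪principalNormal α s, principalNormal α s⟫ = 1 := by
  rw [real_inner_self_eq_norm_sq, principalNormal, norm_smul, norm_inv, Real.norm_of_nonneg hκ.le,
    ← curvature, inv_mul_cancel₀ hκ.ne', one_pow]

theorem inner_deriv_deriv_of_unit_speed (hunit : ∀ s, ‖deriv α s‖ = 1) (s : ℝ) :
    ⟪deriv α s, deriv α s⟫ = 1 := by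
  rw [real_inner_self_eq_norm_sq, hunit, one_pow]

theorem inner_deriv_principalNormal_eq_zero (hα : ContDiff ℝ 2 α)
    (hunit : ∀ s, ‖deriv α s‖ = 1) (s : ℝ) :
    ⟪deriv α s, principalNormal α s⟫ = 0 := by
  have hT : Differentiable ℝ (deriv α) := hα.differentiable_deriv_two
  rw [principalNormal, real_inner_smul_right,
    inner_self_deriv_of_inner_self_const (hT s) (inner_deriv_deriv_of_unit_speed hunit), mul_zero]

end PrincipalNormal

section FrenetFrame

/-- The binormal `B = T × N` of a unit-speed curve. -/
noncomputable def binormal (α : ℝ → EuclideanSpace ℝ (Fin 3)) (s : ℝ) : EuclideanSpace ℝ (Fin 3) :=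
  cross3 (deriv α s) (principalNormal α s)

/-- The torsion `τ = ⟪N′, B⟫` of a unit-speed curve. -/
noncomputable def torsion (α : ℝ → EuclideanSpace ℝ (Fin 3)) (s : ℝ) : ℝ :=
  ⟪deriv (principalNormal α) s, binormal α s⟫

variable {α : ℝ → EuclideanSpace ℝ (Fin 3)} {n : WithTop ℕ∞}

theorem contDiff_binormal (hα : ContDiff ℝ (n + 2) α) (hκ : ∀ s, 0 < curvature α s) :
    ContDiff ℝ n (binormal α) :=
  contDiff_cross3 ((hα.of_le (by gcongr; exact one_le_two)).deriv')
    (contDiff_principalNormal hα hκ)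

theorem contDiff_torsion (hα : ContDiff ℝ (n + 3) α) (hκ : ∀ s, 0 < curvature α s) :
    ContDiff ℝ n (torsion α) := by
  have hα' : ContDiff ℝ (n + 1 + 2) α := by rwa [add_assoc, add_comm 1 2, two_add_one_eq_three]
  exact (contDiff_principalNormal hα' hκ).deriv'.inner ℝ
    (contDiff_binormal (hα'.of_le (by gcongr; exact le_self_add)) hκ)

theorem orthonormal_frenetFrame (hα : ContDiff ℝ 2 α) (hunit : ∀ s, ‖deriv α s‖ = 1) {s : ℝ}
    (hκ : 0 < curvature α s) : Orthonormal ℝ ![deriv α s, principalNormal α s, binormal α s] :=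
  orthonormal_cross3 (inner_deriv_deriv_of_unit_speed hunit s) (inner_principalNormal_self hκ)
    (inner_deriv_principalNormal_eq_zero hα hunit s)

theorem det3_frenetFrame (hα : ContDiff ℝ 2 α) (hunit : ∀ s, ‖deriv α s‖ = 1) {s : ℝ}
    (hκ : 0 < curvature α s) : det3 (deriv α s) (principalNormal α s) (binormal α s) = 1 := by
  rw [det3_rotate, ← inner_cross3]
  exact (orthonormal_three_iff.1 (orthonormal_frenetFrame hα hunit hκ)).1.2.2

theorem hasDerivAt_deriv_eq_curvature_smul (hα : ContDiff ℝ 2 α) {s : ℝ} (hκ : 0 < curvature α s) :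
    HasDerivAt (deriv α) (curvature α s • principalNormal α s) s :=
  deriv_deriv_eq_curvature_smul hκ ▸ (hα.differentiable_deriv_two s).hasDerivAt

theorem differentiable_principalNormal (hα : ContDiff ℝ 3 α) (hκ : ∀ s, 0 < curvature α s) :
    Differentiable ℝ (principalNormal α) :=
  (contDiff_principalNormal (n := 1) hα hκ).differentiable one_ne_zero

theorem differentiable_binormal (hα : ContDiff ℝ 3 α) (hκ : ∀ s, 0 < curvature α s) :
    Differentiable ℝ (binormal α) :=
  (contDiff_binormal (n := 1) hα hκ).differentiable one_ne_zero

theorem deriv_principalNormal (hα : ContDiff ℝ 3 α) (hunit : ∀ s, ‖deriv α s‖ = 1)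
    (hκ : ∀ s, 0 < curvature α s) (s : ℝ) :
    deriv (principalNormal α) s = -curvature α s • deriv α s + torsion α s • binormal α s :=
  have hα₂ : ContDiff ℝ 2 α := hα.of_le (by norm_num)
  deriv_second_of_orthonormal_frame finrank_euclideanSpace_fin
    (fun t => orthonormal_frenetFrame hα₂ hunit (hκ t))
    (hasDerivAt_deriv_eq_curvature_smul hα₂ (hκ s)) (differentiable_principalNormal hα hκ s) rfl

theorem deriv_binormal (hα : ContDiff ℝ 3 α) (hunit : ∀ s, ‖deriv α s‖ = 1)
    (hκ : ∀ s, 0 < curvature α s) (s : ℝ) :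
    deriv (binormal α) s = -torsion α s • principalNormal α s :=
  have hα₂ : ContDiff ℝ 2 α := hα.of_le (by norm_num)
  deriv_third_of_orthonormal_frame finrank_euclideanSpace_fin
    (fun t => orthonormal_frenetFrame hα₂ hunit (hκ t))
    (hasDerivAt_deriv_eq_curvature_smul hα₂ (hκ s)) (differentiable_principalNormal hα hκ s)
    (differentiable_binormal hα hκ s) rfl

end FrenetFrame

section AlternativeFrame

/-- The first alternative curvature `f = √(κ² + τ²)`. -/
noncomputable def altCurvature (α : ℝ → EuclideanSpace ℝ (Fin 3)) (s : ℝ) : ℝ :=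
  √(curvature α s ^ 2 + torsion α s ^ 2)

/-- The second alternative curvature `g = κ² / (κ² + τ²) * (τ / κ)′`. -/
noncomputable def altTorsion (α : ℝ → EuclideanSpace ℝ (Fin 3)) (s : ℝ) : ℝ :=
  curvature α s ^ 2 / (curvature α s ^ 2 + torsion α s ^ 2) *
    deriv (fun u => torsion α u / curvature α u) s

/-- The vector `C = (-κ T + τ B) / f` of the alternative frame `(N, C, W)`; it is the direction
of `N′`. -/
noncomputable def altNormal (α : ℝ → EuclideanSpace ℝ (Fin 3)) (s : ℝ) :
    EuclideanSpace ℝ (Fin 3) :=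
  (altCurvature α s)⁻¹ • (-curvature α s • deriv α s + torsion α s • binormal α s)

/-- The unit Darboux vector `W = (τ T + κ B) / f` of the alternative frame `(N, C, W)`. -/
noncomputable def unitDarboux (α : ℝ → EuclideanSpace ℝ (Fin 3)) (s : ℝ) :
    EuclideanSpace ℝ (Fin 3) :=
  (altCurvature α s)⁻¹ • (torsion α s • deriv α s + curvature α s • binormal α s)

variable {α : ℝ → EuclideanSpace ℝ (Fin 3)} {n : WithTop ℕ∞} {s : ℝ}

theorem curvature_sq_add_torsion_sq_pos (hκ : 0 < curvature α s) :
    0 < curvature α s ^ 2 + torsion α s ^ 2 := by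
  positivity

theorem altCurvature_pos (hκ : 0 < curvature α s) : 0 < altCurvature α s :=
  Real.sqrt_pos.2 (curvature_sq_add_torsion_sq_pos hκ)

theorem altCurvature_sq : altCurvature α s ^ 2 = curvature α s ^ 2 + torsion α s ^ 2 :=
  Real.sq_sqrt (by positivity)

theorem div_altCurvature_sq_add_sq (hκ : 0 < curvature α s) :
    (curvature α s / altCurvature α s) ^ 2 + (torsion α s / altCurvature α s) ^ 2 = 1 := by
  rw [div_pow, div_pow, ← add_div, ← altCurvature_sq,
    div_self (pow_pos (altCurvature_pos hκ) 2).ne']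

theorem contDiff_altCurvature (hα : ContDiff ℝ (n + 3) α) (hκ : ∀ s, 0 < curvature α s) :
    ContDiff ℝ n (altCurvature α) :=
  (((contDiff_curvature (hα.of_le (by gcongr; norm_num)) hκ).pow 2).add
    ((contDiff_torsion hα hκ).pow 2)).sqrt fun s => (curvature_sq_add_torsion_sq_pos (hκ s)).ne'

theorem contDiff_altTorsion (hα : ContDiff ℝ (n + 4) α) (hκ : ∀ s, 0 < curvature α s) :
    ContDiff ℝ n (altTorsion α) := by
  have hα' : ContDiff ℝ (n + 1 + 3) α := by
    rwa [add_assoc, add_comm 1 3, three_add_one_eq_four]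
  have hκ' : ContDiff ℝ (n + 1) (curvature α) :=
    contDiff_curvature (hα'.of_le (by gcongr; norm_num)) hκ
  have hτ' : ContDiff ℝ (n + 1) (torsion α) := contDiff_torsion hα' hκ
  have hκn : ContDiff ℝ n (curvature α) := hκ'.of_le le_self_add
  have hτn : ContDiff ℝ n (torsion α) := hτ'.of_le le_self_add
  exact ((hκn.pow 2).div ((hκn.pow 2).add (hτn.pow 2))
    fun s => (curvature_sq_add_torsion_sq_pos (hκ s)).ne').mul
      (hτ'.div hκ' fun s => (hκ s).ne').deriv'

theorem altNormal_eq (s : ℝ) :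
    altNormal α s = -(curvature α s / altCurvature α s) • deriv α s +
      (torsion α s / altCurvature α s) • binormal α s := by
  rw [altNormal]; module

theorem unitDarboux_eq (s : ℝ) :
    unitDarboux α s = (torsion α s / altCurvature α s) • deriv α s +
      (curvature α s / altCurvature α s) • binormal α s := by
  rw [unitDarboux]; module

theorem deriv_eq_altNormal_unitDarboux (hκ : 0 < curvature α s) :
    deriv α s = -(curvature α s / altCurvature α s) • altNormal α s +
      (torsion α s / altCurvature α s) • unitDarboux α s := by
  rw [altNormal_eq, unitDarboux_eq]
  linear_combination (norm := module) -div_altCurvature_sq_add_sq hκ • deriv α s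

theorem orthonormal_altFrame (hα : ContDiff ℝ 2 α) (hunit : ∀ s, ‖deriv α s‖ = 1)
    (hκ : 0 < curvature α s) :
    Orthonormal ℝ ![principalNormal α s, altNormal α s, unitDarboux α s] := by
  rw [altNormal_eq, unitDarboux_eq]
  exact orthonormal_rotated (orthonormal_frenetFrame hα hunit hκ) (div_altCurvature_sq_add_sq hκ)

theorem det3_altFrame (hα : ContDiff ℝ 2 α) (hunit : ∀ s, ‖deriv α s‖ = 1)
    (hκ : 0 < curvature α s) :
    det3 (principalNormal α s) (altNormal α s) (unitDarboux α s) = 1 := by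
  rw [altNormal_eq, unitDarboux_eq, det3_rotated, div_altCurvature_sq_add_sq hκ,
    det3_frenetFrame hα hunit hκ, mul_one]

theorem hasDerivAt_principalNormal (hα : ContDiff ℝ 3 α) (hunit : ∀ s, ‖deriv α s‖ = 1)
    (hκ : ∀ s, 0 < curvature α s) (s : ℝ) :
    HasDerivAt (principalNormal α) (altCurvature α s • altNormal α s) s := by
  rw [altNormal, smul_inv_smul₀ (altCurvature_pos (hκ s)).ne', ← deriv_principalNormal hα hunit hκ]
  exact (differentiable_principalNormal hα hκ s).hasDerivAt

theorem contDiff_altNormal (hα : ContDiff ℝ (n + 3) α) (hκ : ∀ s, 0 < curvature α s) :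
    ContDiff ℝ n (altNormal α) := by
  have hα₂ : ContDiff ℝ (n + 2) α := hα.of_le (by gcongr; norm_num)
  have hα₁ : ContDiff ℝ (n + 1) α := hα.of_le (by gcongr; norm_num)
  exact ((contDiff_altCurvature hα hκ).inv fun s => (altCurvature_pos (hκ s)).ne').smul
    (((contDiff_curvature hα₂ hκ).neg.smul hα₁.deriv').add
      ((contDiff_torsion hα hκ).smul (contDiff_binormal hα₂ hκ)))

theorem contDiff_unitDarboux (hα : ContDiff ℝ (n + 3) α) (hκ : ∀ s, 0 < curvature α s) :
    ContDiff ℝ n (unitDarboux α) := by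
  have hα₂ : ContDiff ℝ (n + 2) α := hα.of_le (by gcongr; norm_num)
  have hα₁ : ContDiff ℝ (n + 1) α := hα.of_le (by gcongr; norm_num)
  exact ((contDiff_altCurvature hα hκ).inv fun s => (altCurvature_pos (hκ s)).ne').smul
    (((contDiff_torsion hα hκ).smul hα₁.deriv').add
      ((contDiff_curvature hα₂ hκ).smul (contDiff_binormal hα₂ hκ)))

theorem differentiable_curvature_div_altCurvature (hα : ContDiff ℝ 4 α)
    (hκ : ∀ s, 0 < curvature α s) :
    Differentiable ℝ fun s => curvature α s / altCurvature α s :=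
  ((contDiff_curvature (n := 1) (hα.of_le (by norm_num)) hκ).div
    (contDiff_altCurvature (n := 1) hα hκ)
      fun s => (altCurvature_pos (hκ s)).ne').differentiable one_ne_zero

theorem differentiable_torsion_div_altCurvature (hα : ContDiff ℝ 4 α)
    (hκ : ∀ s, 0 < curvature α s) :
    Differentiable ℝ fun s => torsion α s / altCurvature α s :=
  ((contDiff_torsion (n := 1) hα hκ).div (contDiff_altCurvature (n := 1) hα hκ)
    fun s => (altCurvature_pos (hκ s)).ne').differentiable one_ne_zero

theorem altTorsion_eq_wronskian (hα : ContDiff ℝ 4 α) (hκ : ∀ s, 0 < curvature α s) (s : ℝ) :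
    altTorsion α s =
      deriv (fun u => torsion α u / altCurvature α u) s * (curvature α s / altCurvature α s) -
        torsion α s / altCurvature α s * deriv (fun u => curvature α u / altCurvature α u) s := by
  have hf : ∀ u, altCurvature α u ≠ 0 := fun u => (altCurvature_pos (hκ u)).ne'
  have hx : curvature α s / altCurvature α s ≠ 0 := div_ne_zero (hκ s).ne' (hf s)
  have hquot : (fun u => torsion α u / curvature α u) = fun u =>
      torsion α u / altCurvature α u / (curvature α u / altCurvature α u) :=
    funext fun u => (div_div_div_cancel_right₀ (hf u) _ _).symm
  rw [altTorsion, hquot, deriv_fun_div (differentiable_torsion_div_altCurvature hα hκ s)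
    (differentiable_curvature_div_altCurvature hα hκ s) hx, ← altCurvature_sq, ← div_pow,
    mul_div_cancel₀ _ (pow_ne_zero 2 hx)]

theorem inner_deriv_altNormal_unitDarboux (hα : ContDiff ℝ 4 α) (hunit : ∀ s, ‖deriv α s‖ = 1)
    (hκ : ∀ s, 0 < curvature α s) (s : ℝ) :
    ⟪deriv (altNormal α) s, unitDarboux α s⟫ = altTorsion α s := by
  have hα₃ : ContDiff ℝ 3 α := hα.of_le (by norm_num)
  have hα₂ : ContDiff ℝ 2 α := hα.of_le (by norm_num)
  have hx := (differentiable_curvature_div_altCurvature hα hκ s).hasDerivAt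
  have hy := (differentiable_torsion_div_altCurvature hα hκ s).hasDerivAt
  have hT := hasDerivAt_deriv_eq_curvature_smul hα₂ (hκ s)
  have hB := (differentiable_binormal hα₃ hκ s).hasDerivAt
  rw [deriv_binormal hα₃ hunit hκ] at hB
  have hC := (hx.neg.smul hT).add (hy.smul hB)
  obtain ⟨⟨hTT, -, hBB⟩, hTN, hTB, hNB⟩ :=
    orthonormal_three_iff.1 (orthonormal_frenetFrame hα₂ hunit (hκ s))
  rw [funext altNormal_eq, unitDarboux_eq, altTorsion_eq_wronskian hα hκ]
  refine (congrArg (⟪·, _⟫) hC.deriv).trans ?_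
  simp only [inner_add_left, inner_add_right, real_inner_smul_left, real_inner_smul_right,
    real_inner_comm (deriv α s), hTT, hBB, hTN, hTB, hNB]
  ring

theorem hasDerivAt_altNormal (hα : ContDiff ℝ 4 α) (hunit : ∀ s, ‖deriv α s‖ = 1)
    (hκ : ∀ s, 0 < curvature α s) (s : ℝ) :
    HasDerivAt (altNormal α)
      (-altCurvature α s • principalNormal α s + altTorsion α s • unitDarboux α s) s := by
  have hC := (contDiff_altNormal (n := 1) hα hκ).differentiable one_ne_zero s
  rw [← deriv_second_of_orthonormal_frame finrank_euclideanSpace_fin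
    (fun t => orthonormal_altFrame (hα.of_le (by norm_num)) hunit (hκ t))
    (hasDerivAt_principalNormal (hα.of_le (by norm_num)) hunit hκ s) hC
    (inner_deriv_altNormal_unitDarboux hα hunit hκ s)]
  exact hC.hasDerivAt

theorem hasDerivAt_unitDarboux (hα : ContDiff ℝ 4 α) (hunit : ∀ s, ‖deriv α s‖ = 1)
    (hκ : ∀ s, 0 < curvature α s) (s : ℝ) :
    HasDerivAt (unitDarboux α) (-altTorsion α s • altNormal α s) s := by
  have hC := (contDiff_altNormal (n := 1) hα hκ).differentiable one_ne_zero s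
  have hW := (contDiff_unitDarboux (n := 1) hα hκ).differentiable one_ne_zero s
  rw [← deriv_third_of_orthonormal_frame finrank_euclideanSpace_fin
    (fun t => orthonormal_altFrame (hα.of_le (by norm_num)) hunit (hκ t))
    (hasDerivAt_principalNormal (hα.of_le (by norm_num)) hunit hκ s) hC hW
    (inner_deriv_altNormal_unitDarboux hα hunit hκ s)]
  exact hW.hasDerivAt

theorem hasDerivAt_deriv_altNormal (hα : ContDiff ℝ 5 α) (hunit : ∀ s, ‖deriv α s‖ = 1)
    (hκ : ∀ s, 0 < curvature α s) (s : ℝ) :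
    HasDerivAt (deriv (altNormal α))
      (-deriv (altCurvature α) s • principalNormal α s -
        (altCurvature α s ^ 2 + altTorsion α s ^ 2) • altNormal α s +
        deriv (altTorsion α) s • unitDarboux α s) s := by
  have hα₄ : ContDiff ℝ 4 α := hα.of_le (by norm_num)
  have hf := ((contDiff_altCurvature (n := 1) hα₄ hκ).differentiable one_ne_zero s).hasDerivAt
  have hg := ((contDiff_altTorsion (n := 1) hα hκ).differentiable one_ne_zero s).hasDerivAt
  have hN := hasDerivAt_principalNormal (hα.of_le (by norm_num)) hunit hκ s
  have hW := hasDerivAt_unitDarboux hα₄ hunit hκ s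
  rw [funext fun u => (hasDerivAt_altNormal hα₄ hunit hκ u).deriv]
  refine ((hf.neg.smul hN).add (hg.smul hW)).congr_deriv ?_
  simp only [Pi.neg_apply]
  module

end AlternativeFrame

section RuledSurface

variable {E : Type*} [NormedAddCommGroup E] [NormedSpace ℝ E]

/-- The partial derivative `∂φ/∂s` of a parametrized surface `φ(s, v)`. -/
noncomputable def partialFst (φ : ℝ → ℝ → E) (s v : ℝ) : E :=
  deriv (fun u => φ u v) s

/-- The partial derivative `∂φ/∂v` of a parametrized surface `φ(s, v)`. -/
noncomputable def partialSnd (φ : ℝ → ℝ → E) (s v : ℝ) : E :=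
  deriv (fun w => φ s w) v

/-- The ruled surface `φ(s, v) = α(s) + v X(s)` with base curve `α` and director curve `X`. -/
def ruledSurface (α X : ℝ → E) (s v : ℝ) : E :=
  α s + v • X s

variable {α X : ℝ → E}

theorem partialSnd_ruledSurface (s v : ℝ) : partialSnd (ruledSurface α X) s v = X s := by
  simp only [partialSnd, ruledSurface, deriv_const_add]
  simpa using ((hasDerivAt_id v).smul_const (X s)).deriv

theorem partialFst_partialSnd_ruledSurface (s v : ℝ) :
    partialFst (partialSnd (ruledSurface α X)) s v = deriv X s := by
  rw [funext₂ partialSnd_ruledSurface, partialFst]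

theorem partialSnd_partialSnd_ruledSurface (s v : ℝ) :
    partialSnd (partialSnd (ruledSurface α X)) s v = 0 := by
  rw [funext₂ partialSnd_ruledSurface, partialSnd, deriv_const]

theorem partialFst_ruledSurface {s : ℝ} (hα : DifferentiableAt ℝ α s) (hX : DifferentiableAt ℝ X s)
    (v : ℝ) : partialFst (ruledSurface α X) s v = deriv α s + v • deriv X s :=
  (hα.hasDerivAt.add (hX.hasDerivAt.const_smul v)).deriv

theorem partialFst_partialFst_ruledSurface (hα : Differentiable ℝ α) (hX : Differentiable ℝ X)
    {s : ℝ} (hα' : DifferentiableAt ℝ (deriv α) s) (hX' : DifferentiableAt ℝ (deriv X) s) (v : ℝ) :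
    partialFst (partialFst (ruledSurface α X)) s v =
      deriv (deriv α) s + v • deriv (deriv X) s := by
  rw [funext₂ fun u w => partialFst_ruledSurface (hα u) (hX u) w]
  exact (hα'.hasDerivAt.add (hX'.hasDerivAt.const_smul v)).deriv

end RuledSurface

section AltNormalSurface

/-- The `C`-ruled surface `φ(s, v) = α(s) + v C(s)` of the curve `α`. -/
noncomputable abbrev altNormalSurface (α : ℝ → EuclideanSpace ℝ (Fin 3)) :
    ℝ → ℝ → EuclideanSpace ℝ (Fin 3) :=
  ruledSurface α (altNormal α)

variable {α : ℝ → EuclideanSpace ℝ (Fin 3)}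

theorem partialFst_altNormalSurface (hα : ContDiff ℝ 4 α) (hunit : ∀ s, ‖deriv α s‖ = 1)
    (hκ : ∀ s, 0 < curvature α s) (s v : ℝ) :
    partialFst (altNormalSurface α) s v =
      -(v * altCurvature α s) • principalNormal α s +
        -(curvature α s / altCurvature α s) • altNormal α s +
        (torsion α s / altCurvature α s + v * altTorsion α s) • unitDarboux α s := by
  have hC := hasDerivAt_altNormal hα hunit hκ s
  rw [partialFst_ruledSurface (hα.differentiable four_ne_zero s) hC.differentiableAt, hC.deriv]
  linear_combination (norm := module) deriv_eq_altNormal_unitDarboux (hκ s)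

theorem partialFst_partialSnd_altNormalSurface (hα : ContDiff ℝ 4 α)
    (hunit : ∀ s, ‖deriv α s‖ = 1) (hκ : ∀ s, 0 < curvature α s) (s v : ℝ) :
    partialFst (partialSnd (altNormalSurface α)) s v =
      -altCurvature α s • principalNormal α s + (0 : ℝ) • altNormal α s +
        altTorsion α s • unitDarboux α s := by
  rw [partialFst_partialSnd_ruledSurface, (hasDerivAt_altNormal hα hunit hκ s).deriv, zero_smul,
    add_zero]

theorem partialFst_partialFst_altNormalSurface (hα : ContDiff ℝ 5 α)
    (hunit : ∀ s, ‖deriv α s‖ = 1) (hκ : ∀ s, 0 < curvature α s) (s v : ℝ) :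
    partialFst (partialFst (altNormalSurface α)) s v =
      (curvature α s - v * deriv (altCurvature α) s) • principalNormal α s +
        -(v * (altCurvature α s ^ 2 + altTorsion α s ^ 2)) • altNormal α s +
        (v * deriv (altTorsion α) s) • unitDarboux α s := by
  have hα₄ : ContDiff ℝ 4 α := hα.of_le (by norm_num)
  have hT := hasDerivAt_deriv_eq_curvature_smul (hα.of_le (by norm_num)) (hκ s)
  have hC' := hasDerivAt_deriv_altNormal hα hunit hκ s
  rw [partialFst_partialFst_ruledSurface (hα.differentiable (by norm_num))
    (fun u => (hasDerivAt_altNormal hα₄ hunit hκ u).differentiableAt) hT.differentiableAt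
    hC'.differentiableAt, hT.deriv, hC'.deriv]
  module

theorem det3_partialFst_partialSnd_altNormalSurface (hα : ContDiff ℝ 4 α)
    (hunit : ∀ s, ‖deriv α s‖ = 1) (hκ : ∀ s, 0 < curvature α s) (s v : ℝ) :
    det3 (partialFst (altNormalSurface α) s v)
      (partialSnd (altNormalSurface α) s v)
      (partialFst (partialSnd (altNormalSurface α)) s v) = torsion α s := by
  rw [partialFst_altNormalSurface hα hunit hκ, partialSnd_ruledSurface,
    partialFst_partialSnd_altNormalSurface hα hunit hκ, det3_combination_middle,
    det3_altFrame (hα.of_le (by norm_num)) hunit (hκ s)]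
  linear_combination div_mul_cancel₀ (torsion α s) (altCurvature_pos (hκ s)).ne'

theorem det3_partialFst_partialFst_altNormalSurface (hα : ContDiff ℝ 5 α)
    (hunit : ∀ s, ‖deriv α s‖ = 1) (hκ : ∀ s, 0 < curvature α s) (s v : ℝ) :
    det3 (partialFst (altNormalSurface α) s v)
      (partialSnd (altNormalSurface α) s v)
      (partialFst (partialFst (altNormalSurface α)) s v) =
      v ^ 2 * (deriv (altCurvature α) s * altTorsion α s -
        altCurvature α s * deriv (altTorsion α) s) +
      v * deriv (altCurvature α) s * (torsion α s / altCurvature α s) -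
      curvature α s * (torsion α s / altCurvature α s) -
      v * altTorsion α s * curvature α s := by
  rw [partialFst_altNormalSurface (hα.of_le (by norm_num)) hunit hκ, partialSnd_ruledSurface,
    partialFst_partialFst_altNormalSurface hα hunit hκ, det3_combination_middle,
    det3_altFrame (hα.of_le (by norm_num)) hunit (hκ s)]
  ring

theorem stmt_10_general (hα : ContDiff ℝ 5 α) (hunit : ∀ s, ‖deriv α s‖ = 1)
    (hκ : ∀ s, 0 < curvature α s) {s θ : ℝ}
    (hcos : curvature α s = altCurvature α s * Real.cos θ)
    (hsin : torsion α s = altCurvature α s * Real.sin θ) (v : ℝ) :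
    let φ := altNormalSurface α
    let f := altCurvature α
    let g := altTorsion α
    det3 (partialFst φ s v) (partialSnd φ s v) (partialFst (partialSnd φ) s v) =
        f s * Real.sin θ ∧
      f s * Real.sin θ = torsion α s ∧
      det3 (partialFst φ s v) (partialSnd φ s v) (partialFst (partialFst φ) s v) =
        v ^ 2 * (deriv f s * g s - f s * deriv g s) + v * deriv f s * Real.sin θ -
          f s * Real.sin θ * Real.cos θ - v * f s * g s * Real.cos θ ∧
      partialSnd (partialSnd φ) s v = 0 ∧
      det3 (partialFst φ s v) (partialSnd φ s v) (partialSnd (partialSnd φ) s v) = 0 := by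
  intro φ f g
  have hsin' : torsion α s / altCurvature α s = Real.sin θ := by
    rw [hsin, mul_div_cancel_left₀ _ (altCurvature_pos (hκ s)).ne']
  have hvv : partialSnd (partialSnd φ) s v = 0 := partialSnd_partialSnd_ruledSurface s v
  refine ⟨?_, hsin.symm, ?_, hvv, ?_⟩
  · rw [det3_partialFst_partialSnd_altNormalSurface (hα.of_le (by norm_num)) hunit hκ, hsin]
  · rw [det3_partialFst_partialFst_altNormalSurface hα hunit hκ, hsin', hcos]
    ring
  · rw [hvv, det3_rotate, ← inner_cross3, inner_zero_left]

end AltNormalSurface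

theorem stmt_10
    (α : ℝ → EuclideanSpace ℝ (Fin 3))
    (hα : ContDiff ℝ (⊤ : ℕ∞) α)
    (hunit : ∀ s, ‖deriv α s‖ = 1)
    (T : ℝ → EuclideanSpace ℝ (Fin 3)) (hT : ∀ s, T s = deriv α s)
    (κ : ℝ → ℝ) (hκ : ∀ s, κ s = ‖deriv (deriv α) s‖) (hκpos : ∀ s, 0 < κ s)
    (N : ℝ → EuclideanSpace ℝ (Fin 3)) (hN : ∀ s, N s = (κ s)⁻¹ • deriv (deriv α) s)
    (B : ℝ → EuclideanSpace ℝ (Fin 3)) (hB : ∀ s, B s = cross3 (T s) (N s))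
    (τ : ℝ → ℝ) (hτ : ∀ s, τ s = ⟪deriv N s, B s⟫)
    (f : ℝ → ℝ) (hf : ∀ s, f s = Real.sqrt (κ s ^ 2 + τ s ^ 2))
    (g : ℝ → ℝ) (hg : ∀ s, g s = κ s ^ 2 / (κ s ^ 2 + τ s ^ 2) * deriv (fun u => τ u / κ u) s)
    (C : ℝ → EuclideanSpace ℝ (Fin 3))
    (hC : ∀ s, C s = (Real.sqrt (κ s ^ 2 + τ s ^ 2))⁻¹ • ((-κ s) • T s + τ s • B s))
    (W : ℝ → EuclideanSpace ℝ (Fin 3))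
    (hW : ∀ s, W s = (Real.sqrt (κ s ^ 2 + τ s ^ 2))⁻¹ • (τ s • T s + κ s • B s))
    (θ : ℝ → ℝ) (hθdiff : Differentiable ℝ θ)
    (hθderiv : ∀ s, deriv θ s = g s)
    (hθκ : ∀ s, κ s = f s * Real.cos (θ s))
    (hθτ : ∀ s, τ s = f s * Real.sin (θ s))
    (φs φv : ℝ → ℝ → EuclideanSpace ℝ (Fin 3))
    (hφs : ∀ s v, φs s v = deriv (fun u => α u + v • C u) s)
    (hφv : ∀ s v, φv s v = deriv (fun w => α s + w • C s) v)
    (φss φsv φvv : ℝ → ℝ → EuclideanSpace ℝ (Fin 3))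
    (hφss : ∀ s v, φss s v = deriv (fun u => φs u v) s)
    (hφsv : ∀ s v, φsv s v = deriv (fun u => φv u v) s)
    (hφvv : ∀ s v, φvv s v = deriv (fun w => φv s w) v) :
    ∀ (s v : ℝ),
      det3 (φs s v) (φv s v) (φsv s v) = f s * Real.sin (θ s) ∧
      f s * Real.sin (θ s) = τ s ∧
      det3 (φs s v) (φv s v) (φss s v) =
        v ^ 2 * (deriv f s * g s - f s * deriv g s) + v * deriv f s * Real.sin (θ s) -
          f s * Real.sin (θ s) * Real.cos (θ s) - v * f s * g s * Real.cos (θ s) ∧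
      φvv s v = 0 ∧
      det3 (φs s v) (φv s v) (φvv s v) = 0 := by
  obtain rfl : T = deriv α := funext hT
  obtain rfl : κ = curvature α := funext hκ
  obtain rfl : N = principalNormal α := funext hN
  obtain rfl : B = binormal α := funext hB
  obtain rfl : τ = torsion α := funext hτ
  obtain rfl : f = altCurvature α := funext hf
  obtain rfl : g = altTorsion α := funext hg
  obtain rfl : C = altNormal α := funext hC
  obtain rfl : φs = partialFst (altNormalSurface α) := funext₂ hφs
  obtain rfl : φv = partialSnd (altNormalSurface α) := funext₂ hφv
  obtain rfl : φss = partialFst (partialFst (altNormalSurface α)) := funext₂ hφss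
  obtain rfl : φsv = partialFst (partialSnd (altNormalSurface α)) := funext₂ hφsv
  obtain rfl : φvv = partialSnd (partialSnd (altNormalSurface α)) := funext₂ hφvv
  exact fun s v => stmt_10_general (contDiff_infty.1 hα 5) hunit hκpos (hθκ s) (hθτ s) v
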